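/- arXiv:1608.06956 — 2 statements merged into one kernel-verified Lean document; each statement's English description precedes it below -/
import Mathlib

section
/- Let g: N → P be a degree-preserving morphism of Z-graded k[t]-modules with t^{2ε}·P = 0. Then N and ker g are 2ε-interleaved; explicitly, φ: N → ker g given by φ(n) = t^{2ε}·n and the inclusion ψ: ker g → N satisfy φψ = multiplication by t^{2ε} and ψφ = multiplication by t^{2ε}. -/
/-- A `ℤ`-graded `k[t]`-module, i.e. a persistence module over `ℤ`. -/
structure PersMod (k : Type*) [Field k] where
  V : ℤ → Type*
  [grp : ∀ j, AddCommGroup (V j)]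
  [mod : ∀ j, Module k (V j)]
  map : ∀ {i j : ℤ}, i ≤ j → (V i →ₗ[k] V j)
  map_id : ∀ i : ℤ, map (le_refl i) = LinearMap.id
  map_comp : ∀ {i j l : ℤ} (hij : i ≤ j) (hjl : j ≤ l),
    (map hjl).comp (map hij) = map (hij.trans hjl)

attribute [instance] PersMod.grp PersMod.mod

variable {k : Type*} [Field k]

/-- An `ε`-morphism of persistence modules (raises degree by `ε`). -/
structure EHom (M N : PersMod k) (ε : ℕ) where
  f : ∀ j : ℤ, M.V j →ₗ[k] N.V (j + ε)
  natural : ∀ {i j : ℤ} (h : i ≤ j),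
    (f j).comp (M.map h) = (N.map (by omega : (i : ℤ) + (ε : ℤ) ≤ j + (ε : ℤ))).comp (f i)

/-- An `ε`-interleaving: a pair of `ε`-morphisms whose composites in both
orders are multiplication by `t^{2ε}` (the structure maps shifting by `2ε`). -/
structure Interleaving (M N : PersMod k) (ε : ℕ) where
  φ : EHom M N ε
  ψ : EHom N M ε
  comp_φψ : ∀ j : ℤ, (ψ.f (j + ε)).comp (φ.f j)
      = M.map (by omega : (j : ℤ) ≤ j + (ε : ℤ) + (ε : ℤ))
  comp_ψφ : ∀ j : ℤ, (φ.f (j + ε)).comp (ψ.f j)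
      = N.map (by omega : (j : ℤ) ≤ j + (ε : ℤ) + (ε : ℤ))

/-- `t^{2ε} · M = 0`. -/
def IsTrivial (M : PersMod k) (ε : ℕ) : Prop :=
  ∀ j : ℤ, (M.map (by omega : (j : ℤ) ≤ j + 2 * (ε : ℤ))) = 0

/-- A degree-preserving morphism of persistence modules. -/
structure Hom0 (M N : PersMod k) where
  f : ∀ j : ℤ, M.V j →ₗ[k] N.V j
  natural : ∀ {i j : ℤ} (h : i ≤ j), (f j).comp (M.map h) = (N.map h).comp (f i)

/-- `0 → M → N → P → 0` is a short exact sequence of degree-preserving morphisms. -/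
def IsShortExact {M N P : PersMod k} (f : Hom0 M N) (g : Hom0 N P) : Prop :=
  (∀ j : ℤ, Function.Injective (f.f j)) ∧ (∀ j : ℤ, Function.Surjective (g.f j)) ∧
    ∀ j : ℤ, LinearMap.range (f.f j) = LinearMap.ker (g.f j)

/-- The zero persistence module. -/
def zeroPM : PersMod k where
  V _ := PUnit
  map _ := 0
  map_id _ := LinearMap.ext fun _ => rfl
  map_comp _ _ := LinearMap.ext fun _ => rfl

/-- The kernel of a degree-preserving morphism, as a persistence module. -/
def kerPM {N P : PersMod k} (g : Hom0 N P) : PersMod k where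
  V j := LinearMap.ker (g.f j)
  map {i j} h := (N.map h).restrict (p := LinearMap.ker (g.f i)) (q := LinearMap.ker (g.f j))
    (fun x hx => by
      have h1 := LinearMap.congr_fun (g.natural h) x
      simp only [LinearMap.coe_comp, Function.comp_apply] at h1
      simp only [LinearMap.mem_ker] at hx ⊢
      rw [h1, hx, map_zero])
  map_id i := by
    apply LinearMap.ext
    intro x
    apply Subtype.ext
    show (N.map (le_refl i)) (x : N.V i) = (x : N.V i)
    rw [N.map_id]
    rfl
  map_comp {i j l} hij hjl := by
    apply LinearMap.ext
    intro x
    apply Subtype.ext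
    show (N.map hjl) ((N.map hij) (x : N.V i)) = (N.map (hij.trans hjl)) (x : N.V i)
    exact LinearMap.congr_fun (N.map_comp hij hjl) (x : N.V i)

/-! Since `g` commutes with `t`, it sends `t ^ n • x` to `t ^ n • g x`. If this always vanishes,
then multiplication by `t ^ n` on `N` factors through the inclusion `ψ : ker g → N` as
`φ : N → ker g`, and `φ`, `ψ` compose to `t ^ n` in both orders. As `Interleaving` asks for two maps
raising the degree by `n`, the second of them is `t ^ n • ψ`. -/

/-- Multiplication by `t ^ n`, as an `n`-morphism. -/
def PersMod.shift (M : PersMod k) (n : ℕ) : EHom M M n where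
  f j := M.map (by omega)
  natural _ := by rw [M.map_comp, M.map_comp]

/-- The composite of an `n`-morphism after a degree-preserving morphism, again an `n`-morphism. -/
def EHom.compHom0 {L M N : PersMod k} {n : ℕ} (f : EHom M N n) (g : Hom0 L M) : EHom L N n where
  f j := f.f j ∘ₗ g.f j
  natural h := by
    rw [LinearMap.comp_assoc, g.natural, ← LinearMap.comp_assoc, f.natural, LinearMap.comp_assoc]

/-- An `n`-morphism `φ : M → N` and a degree-preserving morphism `ψ : N → M` that compose to
multiplication by `t ^ n` in both orders give the `n`-interleaving formed by `φ` and `t ^ n • ψ`. -/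
def Interleaving.ofHom0 {M N : PersMod k} {n : ℕ} (φ : EHom M N n) (ψ : Hom0 N M)
    (hψφ : ∀ j, ψ.f (j + n) ∘ₗ φ.f j = (M.shift n).f j)
    (hφψ : ∀ j, φ.f j ∘ₗ ψ.f j = (N.shift n).f j) : Interleaving M N n where
  φ := φ
  ψ := (M.shift n).compHom0 ψ
  comp_φψ j := calc
    ((M.shift n).f (j + n) ∘ₗ ψ.f (j + n)) ∘ₗ φ.f j
        = (M.shift n).f (j + n) ∘ₗ (M.shift n).f j := by rw [LinearMap.comp_assoc, hψφ]
    _ = M.map (by omega) := M.map_comp _ _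
  comp_ψφ j := calc
    φ.f (j + n) ∘ₗ (M.shift n).f j ∘ₗ ψ.f j
        = (φ.f (j + n) ∘ₗ M.map (by omega)) ∘ₗ ψ.f j := rfl
    _ = ((N.shift n).f (j + n) ∘ₗ φ.f j) ∘ₗ ψ.f j := congrArg (· ∘ₗ ψ.f j) (φ.natural _)
    _ = (N.shift n).f (j + n) ∘ₗ (N.shift n).f j := by rw [LinearMap.comp_assoc, hφψ]
    _ = N.map (by omega) := N.map_comp _ _

namespace kerPM

/-- The inclusion `ker g → N`, as a degree-preserving morphism. -/
def subtype {N P : PersMod k} (g : Hom0 N P) : Hom0 (kerPM g) N where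
  f j := (LinearMap.ker (g.f j)).subtype
  natural _ := rfl

/-- The factorization through `ker g` of an `n`-morphism annihilated by `g`. -/
def lift {M N P : PersMod k} {n : ℕ} (g : Hom0 N P) (f : EHom M N n)
    (hf : ∀ j, g.f (j + n) ∘ₗ f.f j = 0) : EHom M (kerPM g) n where
  f j := (f.f j).codRestrict (LinearMap.ker (g.f (j + n))) (LinearMap.congr_fun (hf j))
  natural h := LinearMap.ext fun x => Subtype.ext (LinearMap.congr_fun (f.natural h) x)

end kerPM

theorem IsTrivial.shift_eq_zero {M : PersMod k} {ε : ℕ} (hM : IsTrivial M ε) (j : ℤ) :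
    (M.shift (2 * ε)).f j = 0 := calc
  M.map (by omega : j ≤ j + ((2 * ε : ℕ) : ℤ))
      = M.map (by omega) ∘ₗ M.map (by omega : j ≤ j + 2 * (ε : ℤ)) := (M.map_comp _ _).symm
  _ = 0 := by rw [hM j, LinearMap.comp_zero]

theorem ker_interleaved_general {N P : PersMod k} (n : ℕ) (g : Hom0 N P)
    (hg : ∀ j, (P.shift n).f j ∘ₗ g.f j = 0) :
    Nonempty (Interleaving N (kerPM g) n) := by
  have hgt : ∀ j, g.f (j + n) ∘ₗ (N.shift n).f j = 0 := fun j =>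
    (g.natural _).trans (hg j)
  exact ⟨.ofHom0 (kerPM.lift g (N.shift n) hgt) (kerPM.subtype g) (fun _ => rfl) (fun _ => rfl)⟩

/-- If the codomain of `g : N → P` satisfies `t^{2ε}·P = 0`, then `N` and
`ker g` are `2ε`-interleaved. -/
theorem ker_interleaved {N P : PersMod k} (ε : ℕ) (g : Hom0 N P) (hP : IsTrivial P ε) :
    Nonempty (Interleaving N (kerPM g) (2 * ε)) :=
  ker_interleaved_general (2 * ε) g fun j => by
    rw [hP.shift_eq_zero, LinearMap.zero_comp]
end

section
/- Left interleavings satisfy a triangle inequality: if M is 2ε₁-left interleaved with N and N is 2ε₂-left interleaved with P, then M is 2(ε₁+ε₂)-left interleaved with P. -/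
universe u v

variable {k : Type*} [Field k]

/-- `M` is `2ε`-left interleaved with `N`: there is a short exact sequence
`0 → M → N → Q → 0` with `t^{2ε}·Q = 0`. -/
def LeftInterleaved {k : Type u} [Field k] (M N : PersMod.{u, v} k) (ε : ℕ) : Prop :=
  ∃ (Q : PersMod.{u, v} k) (f : Hom0 M N) (g : Hom0 N Q), IsShortExact f g ∧ IsTrivial Q ε

namespace Hom0

section Composition

variable {M N P : PersMod k}

/-- The composite of two degree-preserving morphisms. -/
def comp (g : Hom0 N P) (f : Hom0 M N) : Hom0 M P where
  f j := g.f j ∘ₗ f.f j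
  natural h := by
    rw [LinearMap.comp_assoc, f.natural, ← LinearMap.comp_assoc, g.natural, LinearMap.comp_assoc]

/-- `t^d · N ⊆ im f`, for a morphism `f : M → N`. The target degree `j` is a variable, tied to
`i + d` by an equation, so that sums of shifts need no transport between degrees. -/
def SurjectiveUpTo (f : Hom0 M N) (d : ℕ) : Prop :=
  ∀ ⦃i j : ℤ⦄ (hij : i ≤ j), j = i + d → LinearMap.range (N.map hij) ≤ LinearMap.range (f.f j)

theorem SurjectiveUpTo.comp {g : Hom0 N P} {f : Hom0 M N} {d e : ℕ}
    (hg : g.SurjectiveUpTo e) (hf : f.SurjectiveUpTo d) :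
    (g.comp f).SurjectiveUpTo (d + e) := by
  intro i j hij hj
  have him : i ≤ i + e := by omega
  have hmj : i + e ≤ j := by omega
  calc LinearMap.range (P.map hij)
      = (LinearMap.range (P.map him)).map (P.map hmj) := by
        rw [← P.map_comp him hmj, LinearMap.range_comp]
    _ ≤ (LinearMap.range (g.f (i + e))).map (P.map hmj) := Submodule.map_mono (hg him rfl)
    _ = (LinearMap.range (N.map hmj)).map (g.f j) := by
        rw [← LinearMap.range_comp, ← g.natural, LinearMap.range_comp]
    _ ≤ (LinearMap.range (f.f j)).map (g.f j) := Submodule.map_mono (hf hmj (by omega))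
    _ = LinearMap.range ((g.comp f).f j) := (LinearMap.range_comp _ _).symm

end Composition

section Cokernel

variable {M : PersMod k} {N : PersMod.{_, v} k}

/-- The cokernel of a degree-preserving morphism, formed degreewise. -/
def coker (f : Hom0 M N) : PersMod.{_, v} k where
  V j := N.V j ⧸ LinearMap.range (f.f j)
  map {i j} h := Submodule.mapQ _ _ (N.map h) <| by
    rw [← Submodule.map_le_iff_le_comap, ← LinearMap.range_comp, ← f.natural]
    exact LinearMap.range_comp_le_range _ _
  map_id i := by simp only [N.map_id, Submodule.mapQ_id]
  map_comp hij hjl := by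
    simp only [← N.map_comp hij hjl]
    exact (Submodule.mapQ_comp _ _ _ _ _ _ _).symm

/-- The projection onto the cokernel. -/
def cokerπ (f : Hom0 M N) : Hom0 N f.coker where
  f j := (LinearMap.range (f.f j)).mkQ
  natural _ := rfl

theorem isShortExact_cokerπ (f : Hom0 M N) (hf : ∀ j, Function.Injective (f.f j)) :
    IsShortExact f f.cokerπ :=
  ⟨hf, fun j => (LinearMap.range (f.f j)).mkQ_surjective,
    fun j => (LinearMap.range (f.f j)).ker_mkQ.symm⟩

end Cokernel

end Hom0

theorem IsShortExact.map_eq_zero_iff {M N Q : PersMod k} {f : Hom0 M N} {g : Hom0 N Q}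
    (h : IsShortExact f g) {i j : ℤ} (hij : i ≤ j) :
    Q.map hij = 0 ↔ LinearMap.range (N.map hij) ≤ LinearMap.range (f.f j) := by
  obtain ⟨-, g_surjective, range_eq_ker⟩ := h
  rw [range_eq_ker, LinearMap.range_le_ker_iff, g.natural,
    ← LinearMap.cancel_right (g_surjective i), LinearMap.zero_comp]

theorem IsShortExact.isTrivial_iff {M N Q : PersMod k} {f : Hom0 M N} {g : Hom0 N Q}
    (h : IsShortExact f g) (ε : ℕ) : IsTrivial Q ε ↔ f.SurjectiveUpTo (2 * ε) := by
  constructor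
  · intro hQ i j hij hj
    obtain rfl : j = i + 2 * (ε : ℤ) := by omega
    exact (h.map_eq_zero_iff hij).1 (hQ i)
  · intro hf j
    exact (h.map_eq_zero_iff _).2 (hf _ (by omega))

theorem leftInterleaved_iff {M N : PersMod k} {ε : ℕ} :
    LeftInterleaved M N ε ↔
      ∃ f : Hom0 M N, (∀ j, Function.Injective (f.f j)) ∧ f.SurjectiveUpTo (2 * ε) := by
  constructor
  · rintro ⟨Q, f, g, hfg, hQ⟩
    exact ⟨f, hfg.1, (hfg.isTrivial_iff ε).1 hQ⟩
  · rintro ⟨f, f_injective, hf⟩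
    have hfπ := f.isShortExact_cokerπ f_injective
    exact ⟨f.coker, f, f.cokerπ, hfπ, (hfπ.isTrivial_iff ε).2 hf⟩

/-- Triangle inequality for left interleavings. -/
theorem left_interleaved_triangle (M N P : PersMod k) (ε₁ ε₂ : ℕ)
    (h1 : LeftInterleaved M N ε₁) (h2 : LeftInterleaved N P ε₂) :
    LeftInterleaved M P (ε₁ + ε₂) := by
  obtain ⟨f, f_injective, hf⟩ := leftInterleaved_iff.1 h1
  obtain ⟨g, g_injective, hg⟩ := leftInterleaved_iff.1 h2
  refine leftInterleaved_iff.2 ⟨g.comp f, fun j => (g_injective j).comp (f_injective j), ?_⟩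
  rw [mul_add]
  exact hg.comp hf
end
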